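/- Let (Ω, 𝔽, P) be a probability space, τ > 0, α ≤ β real constants, and K a positive integer. Let S : Ω → 𝒮 and A₁,…,A_K : Ω → 𝒜 be random variables, and let Q₁, Q₂ : 𝒮 × 𝒜 × Ω → ℝ be jointly measurable functions whose values lie almost surely in [α, β]. Assume that for every k ∈ {1,…,K}, the random variable Q₁(S, A_k) − Q₂(S, A_k) has the same distribution as Q₁(S, A₁) − Q₂(S, A₁). Define T̂_K Q_i(S) = −τ · log((1/K) Σ_{k=1}^{K} exp(−Q_i(S, A_k)/τ)) for i = 1, 2. Then ‖T̂_K Q₁(S) − T̂_K Q₂(S)‖_{L²} ≤ exp((β − α)/τ) · ‖Q₁(S, A₁) − Q₂(S, A₁)‖_{L²}. -/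

import Mathlib

open MeasureTheory ProbabilityTheory

/-!
The soft minimum is concave with gradient the Gibbs weights, so
`softMin x - softMin y ≤ ∑ k, wₖ(y) (xₖ - yₖ)`, and values in `[α, β]` force
`wₖ ≤ exp ((β - α) / τ) / K` for `K` samples. Hence two soft minima differ by at most
`exp ((β - α) / τ)` times the average of `|xₖ - yₖ|`, and Minkowski's inequality turns this into the
`Lᵖ` bound, as all the differences have the same `Lᵖ` norm.
-/

open Real Finset
open scoped BigOperators ENNReal

section SoftMin

variable {ι : Type*} {τ α β : ℝ} {s : Finset ι} {x y : ι → ℝ} {k : ι}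

/-- The soft minimum of `x` over `s` at temperature `τ`, normalised by averaging over `s`: applied
to `x k = Q (S, A k)` it is the Monte Carlo soft-Bellman operator `T̂_K Q (S)`. -/
noncomputable def softMin (τ : ℝ) (s : Finset ι) (x : ι → ℝ) : ℝ :=
  -τ * log (𝔼 k ∈ s, exp (-x k / τ))

lemma softMin_Icc_one (K : ℕ) (x : ℕ → ℝ) :
    softMin τ (Icc 1 K) x = -τ * log (1 / (K : ℝ) * ∑ k ∈ Icc 1 K, exp (-x k / τ)) := by
  rw [softMin, expect_eq_sum_div_card, Nat.card_Icc, add_tsub_cancel_right, one_div_mul_eq_div]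

/-- The Gibbs weight of `k` for the energy `x` on `s` at temperature `τ`, the partial derivative of
`softMin τ s` at `x` in the `k`-th coordinate. It is meaningful for `k ∈ s`. -/
noncomputable def gibbsWeight (τ : ℝ) (s : Finset ι) (x : ι → ℝ) (k : ι) : ℝ :=
  exp (-x k / τ) / ∑ j ∈ s, exp (-x j / τ)

lemma gibbsWeight_nonneg : 0 ≤ gibbsWeight τ s x k := by
  unfold gibbsWeight
  positivity

lemma sum_exp_pos (hs : s.Nonempty) (f : ι → ℝ) : 0 < ∑ k ∈ s, exp (f k) :=
  sum_pos (fun _ _ => exp_pos _) hs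

lemma sum_gibbsWeight (hs : s.Nonempty) : ∑ k ∈ s, gibbsWeight τ s x k = 1 := by
  simp only [gibbsWeight, ← sum_div]
  exact div_self (sum_exp_pos hs _).ne'

lemma gibbsWeight_le_exp_div_card (hτ : 0 < τ) (hx : ∀ j ∈ s, x j ∈ Set.Icc α β) (hk : k ∈ s) :
    gibbsWeight τ s x k ≤ exp ((β - α) / τ) / #s := by
  have hs : 0 < (#s : ℝ) := mod_cast card_pos.2 ⟨k, hk⟩
  have numerator_le : exp (-x k / τ) ≤ exp (-α / τ) := by
    have := (hx k hk).1
    gcongr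
  have le_denominator : #s * exp (-β / τ) ≤ ∑ j ∈ s, exp (-x j / τ) := by
    rw [← nsmul_eq_mul]
    refine card_nsmul_le_sum s _ _ fun j hj => ?_
    have := (hx j hj).2
    gcongr
  calc gibbsWeight τ s x k ≤ exp (-α / τ) / (#s * exp (-β / τ)) := by
        unfold gibbsWeight
        gcongr
    _ = exp (-α / τ - -β / τ) / #s := by rw [exp_sub, div_div, mul_comm]
    _ = exp ((β - α) / τ) / #s := by ring_nf

lemma softMin_sub_softMin (hs : s.Nonempty) :
    softMin τ s x - softMin τ s y =
      -τ * log ((∑ k ∈ s, exp (-x k / τ)) / ∑ k ∈ s, exp (-y k / τ)) := by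
  have hs' : (#s : ℝ) ≠ 0 := mod_cast hs.card_ne_zero
  have hx := (sum_exp_pos hs (fun k => -x k / τ)).ne'
  have hy := (sum_exp_pos hs (fun k => -y k / τ)).ne'
  simp only [softMin, expect_eq_sum_div_card, log_div hx hs', log_div hy hs', log_div hx hy]
  ring

lemma softMin_sub_softMin_le_sum_gibbsWeight_mul (hτ : 0 < τ) (hs : s.Nonempty) :
    softMin τ s x - softMin τ s y ≤ ∑ k ∈ s, gibbsWeight τ s y k * (x k - y k) := by
  set m := ∑ k ∈ s, gibbsWeight τ s y k * (x k - y k) with hm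
  have jensen : exp (-m / τ) ≤ (∑ k ∈ s, exp (-x k / τ)) / ∑ k ∈ s, exp (-y k / τ) :=
    calc exp (-m / τ) = exp (∑ k ∈ s, gibbsWeight τ s y k • (-(x k - y k) / τ)) := by
          simp only [hm, smul_eq_mul, ← mul_div_assoc, mul_neg, ← sum_div, sum_neg_distrib]
      _ ≤ ∑ k ∈ s, gibbsWeight τ s y k • exp (-(x k - y k) / τ) :=
          convexOn_exp.map_sum_le (fun _ _ => gibbsWeight_nonneg) (sum_gibbsWeight hs)
            fun _ _ => Set.mem_univ _
      _ = (∑ k ∈ s, exp (-x k / τ)) / ∑ k ∈ s, exp (-y k / τ) := by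
          rw [sum_div]
          refine sum_congr rfl fun k _ => ?_
          rw [gibbsWeight, smul_eq_mul, div_mul_eq_mul_div, ← exp_add]
          ring_nf
  have hlog := (le_log_iff_exp_le
    (div_pos (sum_exp_pos hs (fun k => -x k / τ)) (sum_exp_pos hs (fun k => -y k / τ)))).2 jensen
  rw [div_le_iff₀ hτ] at hlog
  rw [softMin_sub_softMin hs]
  linarith

lemma softMin_sub_softMin_le (hτ : 0 < τ) (hs : s.Nonempty)
    (hy : ∀ k ∈ s, y k ∈ Set.Icc α β) :
    softMin τ s x - softMin τ s y ≤ exp ((β - α) / τ) * 𝔼 k ∈ s, |x k - y k| :=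
  calc softMin τ s x - softMin τ s y ≤ ∑ k ∈ s, gibbsWeight τ s y k * (x k - y k) :=
        softMin_sub_softMin_le_sum_gibbsWeight_mul hτ hs
    _ ≤ ∑ k ∈ s, exp ((β - α) / τ) / #s * |x k - y k| := by
        refine sum_le_sum fun k hk => ?_
        exact (mul_le_mul_of_nonneg_left (le_abs_self _) gibbsWeight_nonneg).trans <|
          mul_le_mul_of_nonneg_right (gibbsWeight_le_exp_div_card hτ hy hk) (abs_nonneg _)
    _ = exp ((β - α) / τ) * 𝔼 k ∈ s, |x k - y k| := by
        rw [← mul_sum, expect_eq_sum_div_card, div_mul_eq_mul_div, mul_div_assoc]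

lemma abs_softMin_sub_softMin_le (hτ : 0 < τ) (hs : s.Nonempty)
    (hx : ∀ k ∈ s, x k ∈ Set.Icc α β) (hy : ∀ k ∈ s, y k ∈ Set.Icc α β) :
    |softMin τ s x - softMin τ s y| ≤ exp ((β - α) / τ) * 𝔼 k ∈ s, |x k - y k| := by
  refine abs_sub_le_iff.2 ⟨softMin_sub_softMin_le hτ hs hy, ?_⟩
  simpa only [abs_sub_comm] using softMin_sub_softMin_le (x := y) hτ hs hx

end SoftMin

section LpNorm

variable {Ω Ω' : Type*} [MeasurableSpace Ω] [MeasurableSpace Ω'] {μ : Measure Ω} {ν : Measure Ω'}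

lemma eLpNorm_expect_norm_le_of_identDistrib {ι E : Type*} [NormedAddCommGroup E]
    [MeasurableSpace E] [OpensMeasurableSpace E] {s : Finset ι} {f : ι → Ω → E} {g : Ω' → E}
    {p : ℝ≥0∞} (hp : 1 ≤ p) (hfg : ∀ k ∈ s, IdentDistrib (f k) g μ ν) :
    eLpNorm (fun ω => 𝔼 k ∈ s, ‖f k ω‖) p μ ≤ eLpNorm g p ν := by
  obtain rfl | hs := s.eq_empty_or_nonempty
  · simp
  have hs' : (#s : ℝ) ≠ 0 := mod_cast hs.card_ne_zero
  have expect_eq : (fun ω => 𝔼 k ∈ s, ‖f k ω‖) = (#s : ℝ)⁻¹ • ∑ k ∈ s, fun ω => ‖f k ω‖ := by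
    ext ω
    simp [expect_eq_sum_div_card, div_eq_inv_mul]
  calc eLpNorm (fun ω => 𝔼 k ∈ s, ‖f k ω‖) p μ
      = ‖(#s : ℝ)⁻¹‖ₑ * eLpNorm (∑ k ∈ s, fun ω => ‖f k ω‖) p μ := by
        rw [expect_eq, eLpNorm_const_smul]
    _ ≤ ‖(#s : ℝ)⁻¹‖ₑ * ∑ k ∈ s, eLpNorm (fun ω => ‖f k ω‖) p μ := by
        gcongr
        exact eLpNorm_sum_le
          (fun k hk => (hfg k hk).norm.aemeasurable_fst.aestronglyMeasurable) hp
    _ = ‖(#s : ℝ)⁻¹‖ₑ * (#s * eLpNorm g p ν) := by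
        rw [sum_congr rfl fun k hk => (eLpNorm_norm (f k)).trans ((hfg k hk).eLpNorm_eq p),
          sum_const, nsmul_eq_mul]
    _ = eLpNorm g p ν := by
        rw [← mul_assoc, enorm_inv hs', Real.enorm_natCast, ENNReal.inv_mul_cancel
          (mod_cast hs.card_ne_zero) (ENNReal.natCast_ne_top _), one_mul]

lemma sqrt_integral_sq_le_toReal_eLpNorm (f : Ω → ℝ) :
    √(∫ ω, f ω ^ 2 ∂μ) ≤ (eLpNorm f 2 μ).toReal := by
  rw [eLpNorm_eq_lintegral_rpow_enorm_toReal two_ne_zero ENNReal.ofNat_ne_top,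
    ← ENNReal.toReal_rpow, ENNReal.toReal_ofNat, ← sqrt_eq_rpow]
  gcongr
  calc ∫ ω, f ω ^ 2 ∂μ ≤ ‖∫ ω, f ω ^ 2 ∂μ‖ := le_norm_self _
    _ ≤ (∫⁻ ω, ENNReal.ofReal ‖f ω ^ 2‖ ∂μ).toReal := norm_integral_le_lintegral_norm _
    _ = (∫⁻ ω, ‖f ω‖ₑ ^ (2 : ℝ) ∂μ).toReal := by
        simp only [ofReal_norm, enorm_pow, ENNReal.rpow_two]

lemma toReal_eLpNorm_two_eq_sqrt_integral_sq {g : Ω → ℝ} (hg : AEStronglyMeasurable g μ) :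
    (eLpNorm g 2 μ).toReal = √(∫ ω, g ω ^ 2 ∂μ) := by
  rw [toReal_eLpNorm hg,
    lpNorm_eq_integral_norm_rpow_toReal two_ne_zero ENNReal.ofNat_ne_top hg, sqrt_eq_rpow]
  simp

lemma sqrt_integral_sq_le_mul_of_eLpNorm_le {f : Ω → ℝ} {g : Ω' → ℝ} {C : ℝ} (hC : 0 ≤ C)
    (hg : MemLp g 2 ν) (h : eLpNorm f 2 μ ≤ ENNReal.ofReal C * eLpNorm g 2 ν) :
    √(∫ ω, f ω ^ 2 ∂μ) ≤ C * √(∫ ω, g ω ^ 2 ∂ν) :=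
  calc √(∫ ω, f ω ^ 2 ∂μ) ≤ (eLpNorm f 2 μ).toReal := sqrt_integral_sq_le_toReal_eLpNorm f
    _ ≤ (ENNReal.ofReal C * eLpNorm g 2 ν).toReal :=
        ENNReal.toReal_mono (ENNReal.mul_ne_top ENNReal.ofReal_ne_top hg.eLpNorm_ne_top) h
    _ = C * √(∫ ω, g ω ^ 2 ∂ν) := by
        rw [ENNReal.toReal_mul, ENNReal.toReal_ofReal hC,
          toReal_eLpNorm_two_eq_sqrt_integral_sq hg.aestronglyMeasurable]

end LpNorm

theorem stmt_3_general {Ω Ω' ι : Type*} [MeasurableSpace Ω] [MeasurableSpace Ω']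
    {μ : Measure Ω} {ν : Measure Ω'} {τ α β : ℝ} (hτ : 0 < τ) {s : Finset ι} (hs : s.Nonempty)
    {X Y : ι → Ω → ℝ} {D : Ω' → ℝ} {p : ℝ≥0∞} (hp : 1 ≤ p)
    (hX : ∀ᵐ ω ∂μ, ∀ k ∈ s, X k ω ∈ Set.Icc α β) (hY : ∀ᵐ ω ∂μ, ∀ k ∈ s, Y k ω ∈ Set.Icc α β)
    (hD : ∀ k ∈ s, IdentDistrib (fun ω => X k ω - Y k ω) D μ ν) :
    eLpNorm (fun ω => softMin τ s (X · ω) - softMin τ s (Y · ω)) p μ ≤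
      ENNReal.ofReal (exp ((β - α) / τ)) * eLpNorm D p ν := by
  have pointwise : ∀ᵐ ω ∂μ, ‖softMin τ s (X · ω) - softMin τ s (Y · ω)‖ ≤
      exp ((β - α) / τ) * ‖𝔼 k ∈ s, ‖X k ω - Y k ω‖‖ := by
    filter_upwards [hX, hY] with ω hXω hYω
    refine (abs_softMin_sub_softMin_le hτ hs hXω hYω).trans ?_
    gcongr
    exact le_norm_self _
  refine (eLpNorm_le_mul_eLpNorm_of_ae_le_mul pointwise p).trans ?_
  gcongr
  exact eLpNorm_expect_norm_le_of_identDistrib hp hD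

/-- **`L²`-Lipschitz property of the plain Monte Carlo approximation of the
soft-Bellman operator.** For jointly measurable random functions `Q₁, Q₂` with values
a.s. in `[α, β]`, such that `Q₁(S,A_k) - Q₂(S,A_k)` has the same distribution as
`Q₁(S,A₁) - Q₂(S,A₁)` for each `k`,
`‖T̂_K Q₁(S) - T̂_K Q₂(S)‖_{L²} ≤ exp((β-α)/τ) ‖Q₁(S,A₁) - Q₂(S,A₁)‖_{L²}`, where
`T̂_K Q(S) = -τ log((1/K) Σ_{k=1}^K exp(-Q(S,A_k)/τ))` and
`‖X‖_{L²} = (E[X²])^{1/2}`. -/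
theorem stmt_3 {Ω S A : Type*} [MeasurableSpace Ω] [MeasurableSpace S] [MeasurableSpace A]
    (P : Measure Ω) [IsProbabilityMeasure P]
    (τ α β : ℝ) (hτ : 0 < τ) (hαβ : α ≤ β)
    (K : ℕ) (hK : 0 < K)
    (Sv : Ω → S) (Av : ℕ → Ω → A)
    (hSv : Measurable Sv) (hAv : ∀ k, Measurable (Av k))
    (Q₁ Q₂ : S × A × Ω → ℝ) (hQ₁ : Measurable Q₁) (hQ₂ : Measurable Q₂)
    (hbound : ∀ᵐ ω ∂P, ∀ s a, Q₁ (s, a, ω) ∈ Set.Icc α β ∧ Q₂ (s, a, ω) ∈ Set.Icc α β)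
    (hident : ∀ k ∈ Finset.Icc 1 K,
      IdentDistrib
        (fun ω => Q₁ (Sv ω, Av k ω, ω) - Q₂ (Sv ω, Av k ω, ω))
        (fun ω => Q₁ (Sv ω, Av 1 ω, ω) - Q₂ (Sv ω, Av 1 ω, ω)) P P) :
    Real.sqrt (∫ ω,
        ((-τ * Real.log ((1 / (K : ℝ)) *
            ∑ k ∈ Finset.Icc 1 K, Real.exp (-Q₁ (Sv ω, Av k ω, ω) / τ))) -
          (-τ * Real.log ((1 / (K : ℝ)) *
            ∑ k ∈ Finset.Icc 1 K, Real.exp (-Q₂ (Sv ω, Av k ω, ω) / τ)))) ^ 2 ∂P) ≤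
      Real.exp ((β - α) / τ) *
        Real.sqrt (∫ ω, (Q₁ (Sv ω, Av 1 ω, ω) - Q₂ (Sv ω, Av 1 ω, ω)) ^ 2 ∂P) := by
  have h_one : 1 ∈ Icc 1 K := mem_Icc.2 ⟨le_rfl, hK⟩
  have hD : MemLp (fun ω => Q₁ (Sv ω, Av 1 ω, ω) - Q₂ (Sv ω, Av 1 ω, ω)) 2 P := by
    refine memLp_of_bounded (a := α - β) (b := β - α) ?_
      (hident 1 h_one).aemeasurable_snd.aestronglyMeasurable 2
    filter_upwards [hbound] with ω h
    obtain ⟨h₁, h₂⟩ := h (Sv ω) (Av 1 ω)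
    exact ⟨sub_le_sub h₁.1 h₂.2, sub_le_sub h₁.2 h₂.1⟩
  have hLp := stmt_3_general hτ ⟨1, h_one⟩ one_le_two
    (hbound.mono fun ω h k _ => (h (Sv ω) (Av k ω)).1)
    (hbound.mono fun ω h k _ => (h (Sv ω) (Av k ω)).2) hident
  simpa only [softMin_Icc_one] using sqrt_integral_sq_le_mul_of_eLpNorm_le (exp_pos _).le hD hLp
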